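/- Every n-player polymatrix game in which each player has m actions has a k-uniform ε-Nash equilibrium whenever k ≥ 8(ln m + ln n − ln ε + ln 8)/ε². -/

import Mathlib

/-!
The equilibrium is obtained by sampling from an exact Nash equilibrium `σ`. Draw `k` independent
pure profiles from the product distribution `σ` and let each player use the empirical distribution
of their own samples. For player `i` and action `a`, the payoff of `a` against the empirical profile
is the average of `k` independent variables with values in `[0, 1]` and mean the payoff of `a`
against `σ`. Chernoff's method (`sum_tail_le`) bounds the probability of a deviation by at least
`ε / 2`, in a given direction, by `exp (-k ε² / 8) ≤ ε / (8 n m)`. There are `2 n m` such events, so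
some sample avoids all of them (`exists_good_sample`). Sampled actions lie in the support of `σ`,
hence are best responses to `σ`, and therefore `ε`-best responses to the empirical profile.

The Nash equilibrium (`exists_nash`) is a solution of the variational inequality
`⟪u x, y - x⟫ ≤ 0` for all `y` in the product `K` of simplices, where `u` is the linear map sending a
profile to the vector of pure payoffs against it. Solutions are the fixed points of the bounded
Lipschitz map `x ↦ proj_K (x + u x)` (`exists_variational`), which exist by Brouwer's theorem.

Brouwer's theorem for Lipschitz maps (`exists_fixed_point`) is proved by the volume argument of
Milnor and Rogers. A fixed-point-free map produces a Lipschitz map `x + h x`, with `h` zero outside a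
ball, that sends the open ball into its boundary sphere. For small `t` the map `x + t h x` permutes
the ball, so `∫ det (1 + t Dh)` over the ball is its volume; the integral is polynomial in `t`, so
the same holds at `t = 1`, where the determinant vanishes because `‖x + h x‖` is constant.
-/

namespace Stmt10

/-- A mixed strategy is k-uniform if it is the uniform distribution over a multiset of
k pure strategies. -/
def KUniform (k m : ℕ) (s : Fin m → ℝ) : Prop :=
  ∃ f : Fin k → Fin m,
    ∀ a, s a = ((Finset.univ.filter (fun t : Fin k => f t = a)).card : ℝ) / k

/-- Payoff of player `i` for pure strategy `a` against the mixed profile `σ` in an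
n-player m-action polymatrix game with edge payoff matrices `pay`. -/
def purePay (n m : ℕ) (pay : Fin n → Fin n → Fin m → Fin m → ℝ)
    (σ : Fin n → Fin m → ℝ) (i : Fin n) (a : Fin m) : ℝ :=
  ∑ j ∈ Finset.univ.erase i, ∑ b, σ j b * pay i j a b

open MeasureTheory Metric Filter Topology
open scoped NNReal ENNReal

/-! ### Lipschitz maps -/

section Lipschitz
variable {E : Type*} [NormedAddCommGroup E] [InnerProductSpace ℝ E]

lemma lipschitz_smul_of_bounded {c : E → ℝ} {g : E → E} {A B : ℝ≥0} {C G : ℝ}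
    (hc : LipschitzWith A c) (hg : LipschitzWith B g) (hcb : ∀ x, |c x| ≤ C)
    (hgb : ∀ x, ‖g x‖ ≤ G) : ∃ K : ℝ≥0, LipschitzWith K (fun x => c x • g x) := by
  have hC : 0 ≤ C := (abs_nonneg _).trans (hcb 0)
  have hG : 0 ≤ G := (norm_nonneg _).trans (hgb 0)
  refine ⟨⟨C * B + A * G, by positivity⟩, LipschitzWith.of_dist_le_mul fun x y => ?_⟩
  have h1 : c x • g x - c y • g y = c x • (g x - g y) + (c x - c y) • g y := by
    rw [smul_sub, sub_smul]; abel
  have h2 := hc.dist_le_mul x y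
  have h3 := hg.dist_le_mul x y
  rw [Real.dist_eq] at h2
  rw [dist_eq_norm] at h3
  rw [dist_eq_norm, h1]
  have hd : 0 ≤ dist x y := dist_nonneg
  calc _ ≤ |c x| * ‖g x - g y‖ + |c x - c y| * ‖g y‖ := by
        refine (norm_add_le _ _).trans ?_
        rw [norm_smul, norm_smul, Real.norm_eq_abs, Real.norm_eq_abs]
    _ ≤ C * (B * dist x y) + (A * dist x y) * G := by
        gcongr
        · exact hcb x
        · exact hgb y
    _ = _ := by
        show _ = (C * B + A * G) * dist x y
        ring

/-- The map `y ↦ y / max ‖y‖ δ` is Lipschitz; it agrees with `y ↦ y / ‖y‖` when `δ ≤ ‖y‖`. -/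
lemma lipschitz_normalize {δ : ℝ} (hδ : 0 < δ) :
    ∃ K : ℝ≥0, LipschitzWith K (fun y : E => (max ‖y‖ δ)⁻¹ • y) := by
  refine ⟨⟨2 / δ, by positivity⟩, LipschitzWith.of_dist_le_mul fun x y => ?_⟩
  show _ ≤ 2 / δ * _
  rw [dist_eq_norm, dist_eq_norm]
  set a := max ‖x‖ δ
  set b := max ‖y‖ δ
  have ha : δ ≤ a := le_max_right _ _
  have hb : δ ≤ b := le_max_right _ _
  have ha0 : 0 < a := hδ.trans_le ha
  have hb0 : 0 < b := hδ.trans_le hb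
  have hyb : ‖y‖ ≤ b := le_max_left _ _
  have hab : |b - a| ≤ ‖x - y‖ := by
    refine (abs_max_sub_max_le_abs _ _ _).trans ?_
    rw [norm_sub_rev]
    exact abs_norm_sub_norm_le _ _
  have h1 : a⁻¹ • x - b⁻¹ • y = a⁻¹ • (x - y) + (a⁻¹ * ((b - a) * b⁻¹)) • y := by
    have : a⁻¹ * ((b - a) * b⁻¹) = a⁻¹ - b⁻¹ := by field_simp
    rw [this, smul_sub, sub_smul]; abel
  rw [h1]
  calc _ ≤ a⁻¹ * ‖x - y‖ + a⁻¹ * (|b - a| * b⁻¹) * ‖y‖ := by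
        refine (norm_add_le _ _).trans ?_
        rw [norm_smul, norm_smul, Real.norm_eq_abs, Real.norm_eq_abs, abs_mul, abs_mul,
          abs_of_pos (inv_pos.2 ha0), abs_of_pos (inv_pos.2 hb0)]
    _ ≤ a⁻¹ * ‖x - y‖ + a⁻¹ * (‖x - y‖ * b⁻¹) * b := by gcongr
    _ = 2 * a⁻¹ * ‖x - y‖ := by field_simp; ring
    _ ≤ 2 / δ * ‖x - y‖ := by
        rw [div_eq_mul_inv]; gcongr

end Lipschitz

/-! ### Brouwer's theorem and variational inequalities -/

/-- `det (1 + t A)` as a polynomial in `t`. -/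
lemma det_eq_eval {E : Type*} [NormedAddCommGroup E] [InnerProductSpace ℝ E]
    [FiniteDimensional ℝ E] (A : E →L[ℝ] E) : ∃ p : Polynomial ℝ, p.natDegree ≤ Module.finrank ℝ E ∧
    ∀ t : ℝ, (ContinuousLinearMap.id ℝ E + t • A).det = p.eval t := by
  classical
  let b := Module.finBasis ℝ E
  let B : Matrix _ _ ℝ := LinearMap.toMatrix b b (A : E →ₗ[ℝ] E)
  refine ⟨Matrix.det ((Polynomial.X : Polynomial ℝ) • B.map Polynomial.C
    + (1 : Matrix _ _ ℝ).map Polynomial.C), ?_, ?_⟩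
  · simpa using Polynomial.natDegree_det_X_add_C_le B 1
  · intro t
    have hM : (((Polynomial.X : Polynomial ℝ) • B.map Polynomial.C
        + (1 : Matrix _ _ ℝ).map Polynomial.C).map (Polynomial.evalRingHom t))
        = 1 + t • B := by
      ext i j
      by_cases hij : i = j
      · simp [hij]; ring
      · simp [hij]; ring
    rw [← Polynomial.coe_evalRingHom, RingHom.map_det, RingHom.mapMatrix_apply, hM,
      ContinuousLinearMap.det, ← LinearMap.det_toMatrix b]
    congr 1
    simp [B]

section Brouwer
variable {E : Type*} [NormedAddCommGroup E] [InnerProductSpace ℝ E] [FiniteDimensional ℝ E]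
  [MeasurableSpace E] [BorelSpace E]

/-- For small `t`, the map `x ↦ x + t h x` is a bijection of the space fixing the complement of the
ball, hence permutes the ball; the change of variables formula then gives the volume of the ball.
The points where `h` is not differentiable form a null set (Rademacher), and so does their image. -/
lemma integral_det_small (h : E → E) (L : ℝ≥0) (hL : LipschitzWith L h) (M : ℝ)
    (hsupp : ∀ x, M ≤ ‖x‖ → h x = 0) :
    ∃ τ : ℝ, 0 < τ ∧ ∀ t ∈ Set.Ioo 0 τ,
      ∫ x in ball (0 : E) M ∩ {x | DifferentiableAt ℝ h x},
        (ContinuousLinearMap.id ℝ E + t • fderiv ℝ h x).det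
          = (volume : Measure E).real (ball 0 M) := by
  classical
  have hdet1 : (ContinuousLinearMap.id ℝ E).det = 1 := by
    simp [ContinuousLinearMap.det]
  have hnull := (MeasureTheory.addHaar_image_le_mul_of_det_lt (volume : Measure E)
    (ContinuousLinearMap.id ℝ E) (m := 2) (by rw [hdet1]; norm_num))
  have hdet : ∀ᶠ A : E →L[ℝ] E in 𝓝 (ContinuousLinearMap.id ℝ E), 0 < A.det := by
    have hc : Continuous (fun A : E →L[ℝ] E => A.det) := ContinuousLinearMap.continuous_det
    exact hc.continuousAt.eventually (lt_mem_nhds (by simp [hdet1]))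
  obtain ⟨η, hη, hηdet⟩ := Metric.eventually_nhds_iff.1 hdet
  obtain ⟨δ₀, hδ₀, hnull⟩ := (mem_nhdsGT_iff_exists_Ioo_subset).1 hnull
  have hL1 : (0 : ℝ) < L + 1 := by positivity
  have hδ₀' : (0 : ℝ) < δ₀ := hδ₀
  refine ⟨min (1 / (L + 1)) (min (η / (L + 1)) (δ₀ / (L + 1))), by positivity, ?_⟩
  rintro t ⟨ht0, ht⟩
  simp only [lt_min_iff, lt_div_iff₀ hL1] at ht
  obtain ⟨ht1, htη, htδ⟩ := ht
  set φ : E → E := fun x => x + t • h x with hφ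
  set c : ℝ≥0 := ⟨t, ht0.le⟩ * (L + 1) with hc
  have hcv : (c : ℝ) = t * (L + 1) := by rw [hc]; rfl
  have happ : ApproximatesLinearOn φ (ContinuousLinearMap.id ℝ E) Set.univ c := by
    intro x _ y _
    have : φ x - φ y - (ContinuousLinearMap.id ℝ E) (x - y) = t • (h x - h y) := by
      simp [hφ, smul_sub]; abel
    rw [this, norm_smul, Real.norm_of_nonneg ht0.le, hcv]
    have h1 := hL.norm_sub_le x y
    have h2 := norm_nonneg (x - y)
    nlinarith [mul_nonneg ht0.le h2, mul_le_mul_of_nonneg_left h1 ht0.le]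
  have happ' : ApproximatesLinearOn φ ((ContinuousLinearEquiv.refl ℝ E : E ≃L[ℝ] E) : E →L[ℝ] E)
      Set.univ c := happ
  have hsmall : Subsingleton E ∨
      c < ‖((ContinuousLinearEquiv.refl ℝ E).symm : E →L[ℝ] E)‖₊⁻¹ := by
    rcases subsingleton_or_nontrivial E with hE | hE
    · exact Or.inl hE
    · right
      have : ‖((ContinuousLinearEquiv.refl ℝ E).symm : E →L[ℝ] E)‖₊ = 1 := by
        have := ContinuousLinearMap.norm_id (𝕜 := ℝ) (E := E)
        exact NNReal.eq this
      rw [this, inv_one, ← NNReal.coe_lt_coe, hcv]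
      simpa using ht1
  have hinj : Function.Injective φ := by
    have := happ'.injOn hsmall
    rwa [Set.injOn_univ] at this
  have hsurj : Function.Surjective φ := happ'.surjective hsmall
  have hout : ∀ x, M ≤ ‖x‖ → φ x = x := fun x hx => by simp [hφ, hsupp x hx]
  -- `φ` is a bijection of the space fixing the complement of the ball, so it preserves the ball
  have hball : φ '' ball 0 M = ball 0 M := by
    ext y
    simp only [Set.mem_image, mem_ball_zero_iff]
    constructor
    · rintro ⟨x, hx, rfl⟩
      by_contra! hy
      have := hinj (hout _ hy)
      rw [this] at hy
      linarith
    · intro hy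
      obtain ⟨x, rfl⟩ := hsurj y
      refine ⟨x, ?_, rfl⟩
      by_contra! hx
      rw [hout x hx] at hy
      linarith
  set D : Set E := {x | DifferentiableAt ℝ h x}
  have hDm : MeasurableSet D := measurableSet_of_differentiableAt ℝ h
  have hD0 : volume Dᶜ = 0 := hL.ae_differentiableAt (μ := volume)
  have hS : MeasurableSet (ball (0 : E) M ∩ D) := measurableSet_ball.inter hDm
  have hder : ∀ x ∈ ball (0 : E) M ∩ D, HasFDerivWithinAt φ
      (ContinuousLinearMap.id ℝ E + t • fderiv ℝ h x) (ball (0 : E) M ∩ D) x := fun x hx =>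
    ((hasFDerivAt_id x).add ((DifferentiableAt.hasFDerivAt hx.2).const_smul t)).hasFDerivWithinAt
  have hpos : ∀ x, 0 < (ContinuousLinearMap.id ℝ E + t • fderiv ℝ h x).det := by
    intro x
    apply hηdet
    rw [dist_eq_norm, add_sub_cancel_left, norm_smul, Real.norm_of_nonneg ht0.le]
    have := norm_fderiv_le_of_lipschitz ℝ hL (x₀ := x)
    nlinarith
  have hcv2 := integral_image_eq_integral_abs_det_fderiv_smul (volume : Measure E) hS hder
    hinj.injOn (fun _ => (1 : ℝ))
  have himg : volume (φ '' (ball 0 M ∩ D)) = volume (ball (0 : E) M) := by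
    apply le_antisymm
    · exact measure_mono ((Set.image_mono Set.inter_subset_left).trans hball.subset)
    · have hz : volume (φ '' Dᶜ) = 0 := by
        have hcpos : 0 < c := by rw [← NNReal.coe_pos, hcv]; positivity
        have hcδ : c < δ₀ := by rw [← NNReal.coe_lt_coe, hcv]; exact htδ
        have := hnull ⟨hcpos, hcδ⟩ Dᶜ φ (happ.mono_set (Set.subset_univ _))
        simpa [hD0] using this
      calc volume (ball (0 : E) M) = volume (φ '' ball 0 M) := by rw [hball]
        _ ≤ volume (φ '' (ball 0 M ∩ D) ∪ φ '' Dᶜ) := by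
            apply measure_mono
            rw [← Set.image_union]
            apply Set.image_mono
            intro x hx
            by_cases hxD : x ∈ D
            · exact Or.inl ⟨hx, hxD⟩
            · exact Or.inr hxD
        _ ≤ _ := measure_union_le _ _
        _ = _ := by rw [hz, add_zero]
  have : ∀ x, |(ContinuousLinearMap.id ℝ E + t • fderiv ℝ h x).det| • (1 : ℝ)
      = (ContinuousLinearMap.id ℝ E + t • fderiv ℝ h x).det := fun x => by
    rw [abs_of_pos (hpos x), smul_eq_mul, mul_one]
  simp only [this] at hcv2
  rw [← hcv2]
  simp [Measure.real, himg]

lemma volume_ball_pos {M : ℝ} (hM : 0 < M) : 0 < (volume : Measure E).real (ball 0 M) :=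
  ENNReal.toReal_pos (measure_ball_pos _ _ hM).ne' measure_ball_lt_top.ne

/-- The function `t ↦ ∫ det (1 + t Dh)` is polynomial and constant for small `t`, so it takes the
same value at `t = 1`. The value at `1` is computed by Lagrange interpolation at small nodes. -/
lemma integral_det_one (h : E → E) (L : ℝ≥0) (hL : LipschitzWith L h) (M : ℝ) (hM : 0 < M)
    (hsupp : ∀ x, M ≤ ‖x‖ → h x = 0) :
      ∫ x in ball (0 : E) M ∩ {x | DifferentiableAt ℝ h x},
        (ContinuousLinearMap.id ℝ E + fderiv ℝ h x).det
          = (volume : Measure E).real (ball 0 M) := by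
  classical
  obtain ⟨τ, hτ, hsm⟩ := integral_det_small h L hL M hsupp
  set d := Module.finrank ℝ E
  let s := Finset.range (d + 1)
  let v : ℕ → ℝ := fun i => τ / (i + 2)
  have hv : Set.InjOn v s := by
    intro i _ j _ hij
    simp only [v] at hij
    rw [div_eq_div_iff (by positivity) (by positivity)] at hij
    have := mul_left_cancel₀ hτ.ne' hij
    have : (i : ℝ) = j := by linarith
    exact_mod_cast this
  have hvτ : ∀ i, v i ∈ Set.Ioo 0 τ := by
    intro i
    refine ⟨by positivity, ?_⟩
    rw [div_lt_iff₀ (by positivity)]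
    nlinarith [(Nat.cast_nonneg i : (0 : ℝ) ≤ i)]
  let w : ℕ → ℝ := fun i => (Lagrange.basis s v i).eval 1
  have hinterp : ∀ p : Polynomial ℝ, p.natDegree ≤ d →
      p.eval 1 = ∑ i ∈ s, p.eval (v i) * w i := by
    intro p hp
    have hdeg : p.degree < s.card := by
      simp only [s, Finset.card_range]
      exact lt_of_le_of_lt Polynomial.degree_le_natDegree (by exact_mod_cast Nat.lt_succ_of_le hp)
    conv_lhs => rw [Lagrange.eq_interpolate hv hdeg]
    simp [Lagrange.interpolate_apply, Polynomial.eval_finsetSum, w]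
  have hw : ∑ i ∈ s, w i = 1 := by
    have := hinterp 1 (by simp)
    simpa using this.symm
  have hpt : ∀ x, (ContinuousLinearMap.id ℝ E + fderiv ℝ h x).det
      = ∑ i ∈ s, (ContinuousLinearMap.id ℝ E + v i • fderiv ℝ h x).det * w i := by
    intro x
    obtain ⟨p, hp, hpe⟩ := det_eq_eval (fderiv ℝ h x)
    have := hinterp p hp
    simp only [← hpe, one_smul] at this
    exact this
  have hint : ∀ i ∈ s, IntegrableOn
      (fun x => (ContinuousLinearMap.id ℝ E + v i • fderiv ℝ h x).det * w i)
      (ball (0 : E) M ∩ {x | DifferentiableAt ℝ h x}) := by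
    intro i _
    -- a function with nonzero Bochner integral is integrable
    refine Integrable.mul_const (Integrable.of_integral_ne_zero ?_) _
    rw [hsm _ (hvτ i)]
    exact (volume_ball_pos hM).ne'
  simp only [hpt]
  rw [integral_finsetSum _ hint]
  calc _ = ∑ i ∈ s, (volume : Measure E).real (ball 0 M) * w i := by
        refine Finset.sum_congr rfl fun i _ => ?_
        rw [integral_mul_const, hsm _ (hvτ i)]
    _ = _ := by rw [← Finset.mul_sum, hw, mul_one]


/-- A retraction onto a sphere of a ball has degenerate derivative, so a compactly supported
Lipschitz perturbation of the identity cannot send a ball into its boundary sphere. -/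
lemma no_retraction (h : E → E) (L : ℝ≥0) (hL : LipschitzWith L h) (M : ℝ) (hM : 0 < M)
    (hsupp : ∀ x, M ≤ ‖x‖ → h x = 0) (hsph : ∀ x ∈ ball (0 : E) M, ‖x + h x‖ = M) : False := by
  have key := integral_det_one h L hL M hM hsupp
  have hS : MeasurableSet (ball (0 : E) M ∩ {x | DifferentiableAt ℝ h x}) :=
    measurableSet_ball.inter (measurableSet_of_differentiableAt ℝ h)
  rw [setIntegral_congr_fun (g := fun _ => (0 : ℝ)) hS] at key
  · simp only [integral_zero] at key
    exact (volume_ball_pos hM).ne key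
  · rintro x ⟨hx, hxd⟩
    have hxd' : DifferentiableAt ℝ h x := hxd
    show (ContinuousLinearMap.id ℝ E + fderiv ℝ h x).det = 0
    set T := ContinuousLinearMap.id ℝ E + fderiv ℝ h x
    have hr : HasFDerivAt (fun y => y + h y) T x := (hasFDerivAt_id x).add hxd'.hasFDerivAt
    by_contra hne
    have hsurj : Function.Surjective T := by
      have hu : IsUnit (LinearMap.det (T : E →ₗ[ℝ] E)) := isUnit_iff_ne_zero.2 hne
      intro y
      obtain ⟨z, hz⟩ := (LinearMap.equivOfIsUnitDet hu).surjective y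
      exact ⟨z, (LinearMap.equivOfIsUnitDet_apply hu z).symm.trans hz⟩
    obtain ⟨z, hz⟩ := hsurj (x + h x)
    have h1 := hr.inner ℝ hr
    have h2 : HasFDerivAt (fun y => inner ℝ (y + h y) (y + h y)) (0 : E →L[ℝ] ℝ) x := by
      refine (hasFDerivAt_const (M ^ 2) x).congr_of_eventuallyEq ?_
      filter_upwards [isOpen_ball.mem_nhds hx] with y hy
      rw [real_inner_self_eq_norm_sq, hsph y hy]
    have h3 := congrArg (fun A : E →L[ℝ] ℝ => A z) (h1.unique h2)
    simp [hz] at h3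
    have h4 := hsph x hx
    rw [h3] at h4
    simp at h4
    linarith

/-- **Brouwer's fixed point theorem** for bounded Lipschitz self-maps of a Euclidean space. -/
lemma exists_fixed_point (f : E → E) (L : ℝ≥0) (hL : LipschitzWith L f) (R : ℝ)
    (hR : ∀ x, ‖f x‖ ≤ R) : ∃ x, f x = x := by
  obtain ⟨R, hR0, hR⟩ : ∃ R : ℝ, 0 < R ∧ ∀ x, ‖f x‖ ≤ R :=
    ⟨max R 1, by positivity, fun x => (hR x).trans (le_max_left _ _)⟩
  by_contra! hfix
  set M := 3 * R with hM
  have hM0 : 0 < M := by positivity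
  -- the cutoff is `1` on the ball of radius `2 R`, and `0` outside the ball of radius `3 R`
  let c : E → ℝ := fun x => max 0 (min 1 ((M - ‖x‖) * R⁻¹))
  have hc0 : ∀ x, 0 ≤ c x := fun x => le_max_left _ _
  have hc1 : ∀ x, c x ≤ 1 := fun x => max_le zero_le_one (min_le_left _ _)
  have hcout : ∀ x, M ≤ ‖x‖ → c x = 0 := fun x hx => by
    refine max_eq_left ((min_le_right _ _).trans ?_)
    exact mul_nonpos_of_nonpos_of_nonneg (by linarith) (by positivity)
  have hcR : ∀ x, ‖x‖ ≤ M → c x * R ≤ M - ‖x‖ := fun x hx => by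
    have : c x ≤ (M - ‖x‖) * R⁻¹ :=
      max_le (mul_nonneg (by linarith) (by positivity)) (min_le_right _ _)
    calc c x * R ≤ (M - ‖x‖) * R⁻¹ * R := by gcongr
      _ = _ := by field_simp
  have hcin : ∀ x, ‖x‖ ≤ 2 * R → c x = 1 := fun x hx => by
    have : 1 ≤ (M - ‖x‖) * R⁻¹ := by
      rw [← div_eq_mul_inv, le_div_iff₀ hR0]; linarith
    simp only [c, min_eq_left this]
    norm_num
  have hcL : LipschitzWith (⟨R⁻¹, by positivity⟩) c := by
    have h1 : LipschitzWith ⟨R⁻¹, by positivity⟩ (fun x : E => (M - ‖x‖) * R⁻¹) := by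
      refine LipschitzWith.of_dist_le_mul fun x y => ?_
      show _ ≤ R⁻¹ * _
      rw [Real.dist_eq, dist_eq_norm, ← sub_mul, abs_mul, abs_of_pos (inv_pos.2 hR0), mul_comm]
      gcongr
      rw [sub_sub_sub_cancel_left, norm_sub_rev]
      exact abs_norm_sub_norm_le _ _
    exact (h1.const_min 1).const_max 0
  obtain ⟨K₁, hK₁⟩ := lipschitz_smul_of_bounded hcL hL (C := 1)
    (fun x => by rw [abs_of_nonneg (hc0 x)]; exact hc1 x) hR
  let φ : E → E := fun x => x - c x • f x
  have hφL : LipschitzWith (1 + K₁) φ := LipschitzWith.id.sub hK₁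
  have hφout : ∀ x, M ≤ ‖x‖ → φ x = x := fun x hx => by simp [φ, hcout x hx]
  have hcf : ∀ x, ‖c x • f x‖ ≤ c x * R := fun x => by
    rw [norm_smul, Real.norm_of_nonneg (hc0 x)]
    exact mul_le_mul_of_nonneg_left (hR x) (hc0 x)
  have hφin : ∀ x, ‖x‖ ≤ M → ‖φ x‖ ≤ M := fun x hx => by
    have := norm_sub_le x (c x • f x)
    have := hcf x
    have := hcR x hx
    simp only [φ]; linarith
  have hφ0 : ∀ x, φ x ≠ 0 := fun x hx => by
    have hx' : x = c x • f x := sub_eq_zero.1 hx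
    have h1 : ‖x‖ ≤ 2 * R := by
      have := hcf x
      rw [← hx'] at this
      nlinarith [hc1 x]
    rw [hcin x h1, one_smul] at hx'
    exact hfix x hx'.symm
  obtain ⟨δ, hδ, hφδ⟩ : ∃ δ : ℝ, 0 < δ ∧ ∀ x, ‖x‖ ≤ M → δ ≤ ‖φ x‖ := by
    obtain ⟨x₀, -, hx₀⟩ := (isCompact_closedBall (0 : E) M).exists_isMinOn
      ⟨0, by simp [hM0.le]⟩ (f := fun x => ‖φ x‖) hφL.continuous.norm.continuousOn
    exact ⟨‖φ x₀‖, norm_pos_iff.2 (hφ0 x₀), fun x hx => hx₀ (by simpa using hx)⟩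
  obtain ⟨K₂, hK₂⟩ := lipschitz_normalize (E := E) hδ
  let N : E → E := fun y => (max ‖y‖ δ)⁻¹ • y
  let e : E → ℝ := fun x => max 0 (M - ‖φ x‖)
  have heL : LipschitzWith (1 + K₁) e := by
    have h1 : LipschitzWith (1 + K₁) (fun x => M - ‖φ x‖) := by
      refine LipschitzWith.of_dist_le_mul fun x y => ?_
      refine le_trans ?_ (hφL.dist_le_mul x y)
      rw [Real.dist_eq, dist_eq_norm, sub_sub_sub_cancel_left, norm_sub_rev (φ x)]
      exact abs_norm_sub_norm_le _ _
    exact h1.const_max 0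
  obtain ⟨K₃, hK₃⟩ := lipschitz_smul_of_bounded (g := fun x => N (φ x)) heL (hK₂.comp hφL)
    (C := M) (G := 1)
    (fun x => by
      rw [abs_of_nonneg (le_max_left _ _)]
      exact max_le hM0.le (by linarith [norm_nonneg (φ x)]))
    (fun x => by
      have : 0 < max ‖φ x‖ δ := lt_max_of_lt_right hδ
      simp only [N]
      rw [norm_smul, Real.norm_of_nonneg (inv_nonneg.2 this.le), inv_mul_le_iff₀ this, mul_one]
      exact le_max_left _ _)
  -- `x + h x` pushes `φ x` radially onto the sphere of radius `M` whenever `‖φ x‖ ≤ M`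
  let h : E → E := fun x => e x • N (φ x) - c x • f x
  refine no_retraction h (K₃ + K₁) (hK₃.sub hK₁) M hM0 ?_ ?_
  · intro x hx
    have : e x = 0 := max_eq_left (by rw [hφout x hx]; linarith)
    simp [h, this, hcout x hx]
  · intro x hx
    have hx' : ‖x‖ ≤ M := (mem_ball_zero_iff.1 hx).le
    have h1 := hφδ x hx'
    have hpos : 0 < ‖φ x‖ := hδ.trans_le h1
    have hxe : x + h x = φ x + e x • N (φ x) := by simp only [h, φ]; abel
    have he : e x = M - ‖φ x‖ := max_eq_right (by linarith [hφin x hx'])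
    have : x + h x = (M * ‖φ x‖⁻¹) • φ x := by
      rw [hxe, he]
      simp only [N, max_eq_left h1]
      rw [smul_smul]
      nth_rewrite 1 [← one_smul ℝ (φ x)]
      rw [← add_smul]
      congr 1
      field_simp
      ring
    rw [this, norm_smul, Real.norm_of_nonneg (by positivity)]
    field_simp

/-- Existence of solutions of variational inequalities: the fixed points of
`x ↦ proj_K (x + u x)` are the points `x ∈ K` at which `u x` is normal to `K`. -/
lemma exists_variational (K : Set E) (hne : K.Nonempty) (hcl : IsClosed K) (hcv : Convex ℝ K)
    (R : ℝ) (hR : ∀ x ∈ K, ‖x‖ ≤ R) (u : E →ₗ[ℝ] E) :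
    ∃ x ∈ K, ∀ y ∈ K, inner ℝ (u x) (y - x) ≤ 0 := by
  have hproj : ∀ z : E, ∃ v ∈ K, ∀ w ∈ K, inner ℝ (z - v) (w - v) ≤ 0 := by
    intro z
    obtain ⟨v, hv, hvm⟩ := exists_norm_eq_iInf_of_complete_convex hne hcl.isComplete hcv z
    exact ⟨v, hv, (norm_eq_iInf_iff_real_inner_le_zero hcv hv).1 hvm⟩
  choose P hPK hP using hproj
  have hPL : LipschitzWith 1 P := by
    refine LipschitzWith.of_dist_le_mul fun x y => ?_
    rw [NNReal.coe_one, one_mul, dist_eq_norm, dist_eq_norm]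
    have h1 := hP x (P y) (hPK y)
    have h2 := hP y (P x) (hPK x)
    have h3 : ‖P x - P y‖ ^ 2 ≤ inner ℝ (x - y) (P x - P y) := by
      rw [← real_inner_self_eq_norm_sq]
      have e : inner ℝ (x - P x) (P y - P x) + inner ℝ (y - P y) (P x - P y)
          = inner ℝ (P x - P y) (P x - P y) - inner ℝ (x - y) (P x - P y) := by
        rw [← neg_sub (P x) (P y), inner_neg_right, ← sub_eq_neg_add, ← inner_sub_left,
          ← inner_sub_left]
        congr 1; abel
      linarith
    have h4 := real_inner_le_norm (x - y) (P x - P y)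
    by_contra! hlt
    nlinarith [norm_nonneg (x - y)]
  obtain ⟨x, hx⟩ := exists_fixed_point (fun x => P (x + u x)) _
    (hPL.comp (LipschitzWith.id.add (LinearMap.toContinuousLinearMap u).lipschitz)) R
    (fun x => hR _ (hPK _))
  have hx' : P (x + u x) = x := hx
  refine ⟨x, hx' ▸ hPK _, fun y hy => ?_⟩
  have := hP (x + u x) y hy
  rwa [hx', add_sub_cancel_left] at this

end Brouwer

/-! ### Sampling -/

section Sampling

/-- A bound of Hoeffding type for the moment generating function. -/
lemma sum_exp_le {Ω : Type*} [Fintype Ω] (p Z : Ω → ℝ) (hp : ∀ ω, 0 ≤ p ω) (hp1 : ∑ ω, p ω = 1)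
    (hZ : ∀ ω, |Z ω| ≤ 1) (hmean : ∑ ω, p ω * Z ω = 0) (l : ℝ) :
    ∑ ω, p ω * Real.exp (l * Z ω) ≤ Real.exp (l ^ 2 / 2) := by
  calc ∑ ω, p ω * Real.exp (l * Z ω)
      ≤ ∑ ω, p ω * (Real.cosh l + Z ω * Real.sinh l) := by
        refine Finset.sum_le_sum fun ω _ => mul_le_mul_of_nonneg_left ?_ (hp ω)
        rw [mul_comm]
        exact Real.exp_mul_le_cosh_add_mul_sinh (hZ ω) l
    _ = Real.cosh l := by
        simp only [mul_add, ← mul_assoc, Finset.sum_add_distrib, ← Finset.sum_mul, hp1, hmean]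
        ring
    _ ≤ _ := Real.cosh_le_exp_half_sq l

/-- Chernoff's method: the left side bounds the probability that `∑ t, Z (f t) ≥ k δ` for `k`
independent samples `f t` of law `p`. -/
lemma sum_tail_le {Ω : Type*} [Fintype Ω] (p Z : Ω → ℝ) (hp : ∀ ω, 0 ≤ p ω)
    (hp1 : ∑ ω, p ω = 1) (hZ : ∀ ω, |Z ω| ≤ 1) (hmean : ∑ ω, p ω * Z ω = 0) (δ : ℝ) (k : ℕ) :
    ∑ f : Fin k → Ω, (∏ t, p (f t)) * Real.exp (δ * ∑ t, Z (f t) - k * δ ^ 2)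
      ≤ Real.exp (-(k * δ ^ 2 / 2)) := by
  classical
  have h1 : ∀ f : Fin k → Ω, (∏ t, p (f t)) * Real.exp (δ * ∑ t, Z (f t) - k * δ ^ 2)
      = (∏ t, p (f t) * Real.exp (δ * Z (f t))) * Real.exp (-(k * δ ^ 2)) := by
    intro f
    rw [Finset.prod_mul_distrib, ← Real.exp_sum, ← Finset.mul_sum, mul_assoc, ← Real.exp_add,
      sub_eq_add_neg]
  simp only [h1]
  rw [← Finset.sum_mul, ← Fintype.prod_sum (fun (_ : Fin k) ω => p ω * Real.exp (δ * Z ω)),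
    Finset.prod_const, Finset.card_univ, Fintype.card_fin]
  calc _ ≤ (Real.exp (δ ^ 2 / 2)) ^ k * Real.exp (-(k * δ ^ 2)) := by
        gcongr
        · exact Finset.sum_nonneg fun ω _ => mul_nonneg (hp ω) (Real.exp_pos _).le
        · exact sum_exp_le p Z hp hp1 hZ hmean δ
    _ = _ := by
        rw [← Real.exp_nat_mul, ← Real.exp_add]
        congr 1; ring

/-- The union bound over the deviations `Z j`: some `k` samples from the support of `p` satisfy
all the concentration inequalities at once. -/
lemma exists_good_sample {Ω ι : Type*} [Fintype Ω] [Fintype ι] (p : Ω → ℝ) (Z : ι → Ω → ℝ)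
    (hp : ∀ ω, 0 ≤ p ω) (hp1 : ∑ ω, p ω = 1) (hZ : ∀ j ω, |Z j ω| ≤ 1)
    (hmean : ∀ j, ∑ ω, p ω * Z j ω = 0) (δ : ℝ) (hδ : 0 < δ) (k : ℕ)
    (hk : Fintype.card ι * Real.exp (-(k * δ ^ 2 / 2)) < 1) :
    ∃ f : Fin k → Ω, (∀ t, 0 < p (f t)) ∧ ∀ j, ∑ t, Z j (f t) < k * δ := by
  classical
  by_contra! hcon
  have h1 : ∀ f : Fin k → Ω, ∏ t, p (f t)
      ≤ ∑ j, (∏ t, p (f t)) * Real.exp (δ * ∑ t, Z j (f t) - k * δ ^ 2) := by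
    intro f
    have hnn : ∀ j, 0 ≤ (∏ t, p (f t)) * Real.exp (δ * ∑ t, Z j (f t) - k * δ ^ 2) := fun j =>
      mul_nonneg (Finset.prod_nonneg fun t _ => hp _) (Real.exp_pos _).le
    by_cases hf : ∀ t, 0 < p (f t)
    · obtain ⟨j, hj⟩ := hcon f hf
      refine le_trans ?_ (Finset.single_le_sum (fun j _ => hnn j) (Finset.mem_univ j))
      refine le_mul_of_one_le_right (Finset.prod_nonneg fun t _ => hp _) ?_
      rw [Real.one_le_exp_iff]
      nlinarith [mul_le_mul_of_nonneg_left hj hδ.le]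
    · push Not at hf
      obtain ⟨t, ht⟩ := hf
      rw [Finset.prod_eq_zero (Finset.mem_univ t) (le_antisymm ht (hp _))]
      simp
  have h2 : ∑ f : Fin k → Ω, ∏ t, p (f t) = 1 := by
    rw [← Fintype.prod_sum (fun (_ : Fin k) ω => p ω)]
    simp [hp1]
  have h3 := Finset.sum_le_sum fun f (_ : f ∈ Finset.univ) => h1 f
  rw [h2, Finset.sum_comm] at h3
  have h4 : ∑ j, ∑ f : Fin k → Ω, (∏ t, p (f t)) * Real.exp (δ * ∑ t, Z j (f t) - k * δ ^ 2)
      ≤ ∑ _j : ι, Real.exp (-(k * δ ^ 2 / 2)) :=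
    Finset.sum_le_sum fun j _ => sum_tail_le p (Z j) hp hp1 (hZ j) (hmean j) δ k
  rw [Finset.sum_const, nsmul_eq_mul, Finset.card_univ] at h4
  linarith

end Sampling

/-! ### Equilibria of polymatrix games -/

section Game
variable {n m : ℕ} (pay : Fin n → Fin n → Fin m → Fin m → ℝ)

/-- Every polymatrix game has an exact Nash equilibrium: a mixed profile in which each action
played with positive probability is a best response. -/
lemma exists_nash (hm : 0 < m) : ∃ σ : Fin n → Fin m → ℝ,
    (∀ i, (∀ a, 0 ≤ σ i a) ∧ ∑ a, σ i a = 1) ∧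
    ∀ i a, 0 < σ i a → ∀ a', purePay n m pay σ i a' ≤ purePay n m pay σ i a := by
  classical
  let K : Set (EuclideanSpace ℝ (Fin n × Fin m)) := {x | ∀ i, (∀ a, 0 ≤ x (i, a)) ∧ ∑ a, x (i, a) = 1}
  let u : EuclideanSpace ℝ (Fin n × Fin m) →ₗ[ℝ] EuclideanSpace ℝ (Fin n × Fin m) :=
    { toFun := fun x => WithLp.toLp 2 fun q => purePay n m pay (fun i a => x (i, a)) q.1 q.2
      map_add' := fun x y => by
        ext q
        simp [purePay, add_mul, Finset.sum_add_distrib]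
      map_smul' := fun c x => by
        ext q
        simp [purePay, mul_sub, Finset.mul_sum, mul_assoc] }
  have hne : K.Nonempty := by
    refine ⟨WithLp.toLp 2 fun q => if q.2 = ⟨0, hm⟩ then 1 else 0, fun i => ⟨fun a => ?_, ?_⟩⟩
    · show (0 : ℝ) ≤ if a = ⟨0, hm⟩ then 1 else 0
      split_ifs <;> norm_num
    · simp
  have hcl : IsClosed K := by
    have : K = ⋂ i, ((⋂ a, {x : EuclideanSpace ℝ (Fin n × Fin m) | 0 ≤ x (i, a)}) ∩
        {x : EuclideanSpace ℝ (Fin n × Fin m) | ∑ a, x (i, a) = 1}) := by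
      ext x; simp [K]
    rw [this]
    refine isClosed_iInter fun i => (isClosed_iInter fun a => ?_).inter ?_
    · exact isClosed_le continuous_const (by fun_prop)
    · exact isClosed_eq (by fun_prop) continuous_const
  have hcv : Convex ℝ K := by
    intro x hx y hy a b ha hb hab i
    refine ⟨fun c => ?_, ?_⟩
    · have h1 := (hx i).1 c
      have h2 := (hy i).1 c
      simp only [PiLp.add_apply, PiLp.smul_apply, smul_eq_mul]
      positivity
    · simp only [PiLp.add_apply, PiLp.smul_apply, smul_eq_mul, Finset.sum_add_distrib,
        ← Finset.mul_sum, (hx i).2, (hy i).2, mul_one, hab]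
  have hR : ∀ x ∈ K, ‖x‖ ≤ Real.sqrt (∑ _q : Fin n × Fin m, 1) := by
    intro x hx
    rw [EuclideanSpace.norm_eq]
    refine Real.sqrt_le_sqrt (Finset.sum_le_sum fun q _ => ?_)
    have h0 := (hx q.1).1 q.2
    have h1 : x (q.1, q.2) ≤ 1 := by
      rw [← (hx q.1).2]
      exact Finset.single_le_sum (f := fun a => x (q.1, a)) (fun a _ => (hx q.1).1 a)
        (Finset.mem_univ _)
    rw [Real.norm_of_nonneg h0]
    exact pow_le_one₀ h0 h1
  obtain ⟨x, hx, hvar⟩ := exists_variational K hne hcl hcv _ hR u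
  let σ : Fin n → Fin m → ℝ := fun i a => x (i, a)
  -- test the variational inequality against a unilateral deviation to a pure strategy
  have hdev : ∀ i a, purePay n m pay σ i a ≤ ∑ b, σ i b * purePay n m pay σ i b := by
    intro i a
    let y : EuclideanSpace ℝ (Fin n × Fin m) := WithLp.toLp 2 fun q =>
      if q.1 = i then (if q.2 = a then 1 else 0) else x q
    have hy : y ∈ K := by
      intro j
      by_cases hj : j = i
      · refine ⟨fun b => ?_, ?_⟩
        · simp only [y, hj, if_true]
          split_ifs <;> norm_num
        · simp [y, hj]
      · simpa [y, hj] using hx j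
    have h := hvar y hy
    rw [PiLp.inner_apply, Fintype.sum_prod_type, Finset.sum_eq_single i] at h
    · simp only [y, u, PiLp.sub_apply, if_true, LinearMap.coe_mk, AddHom.coe_mk,
        RCLike.inner_apply, conj_trivial, sub_mul, Finset.sum_sub_distrib, ite_mul, one_mul,
        zero_mul, Finset.sum_ite_eq', Finset.mem_univ] at h
      simp only [σ]
      linarith
    · intro j _ hj
      simp [y, hj]
    · simp
  refine ⟨σ, hx, fun i a ha a' => ?_⟩
  set v := ∑ b, σ i b * purePay n m pay σ i b with hv
  have hz : ∑ b, σ i b * (v - purePay n m pay σ i b) = 0 := by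
    simp only [mul_sub, Finset.sum_sub_distrib, ← Finset.sum_mul, ← hv]
    have : ∑ b, σ i b = 1 := (hx i).2
    rw [this]; ring
  have hz' := (Finset.sum_eq_zero_iff_of_nonneg fun b _ =>
    mul_nonneg ((hx i).1 b) (sub_nonneg.2 (hdev i b))).1 hz a (Finset.mem_univ a)
  have := (mul_eq_zero.1 hz').resolve_left ha.ne'
  linarith [hdev i a']

/-- The expectation under a product distribution of a function of one coordinate. -/
lemma sum_prod_marginal (σ : Fin n → Fin m → ℝ) (hσ : ∀ i, ∑ a, σ i a = 1) (j : Fin n)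
    (g : Fin m → ℝ) : ∑ b : Fin n → Fin m, (∏ i, σ i (b i)) * g (b j) = ∑ c, σ j c * g c := by
  classical
  have h1 : ∀ b : Fin n → Fin m, (∏ i, σ i (b i)) * g (b j)
      = ∏ i, (σ i (b i) * if i = j then g (b i) else 1) := by
    intro b
    rw [Finset.prod_mul_distrib]
    simp
  simp only [h1]
  rw [← Fintype.prod_sum (fun i c => σ i c * if i = j then g c else 1),
    Finset.prod_eq_single j]
  · simp
  · intro i _ hi
    simp [hi, hσ]
  · simp

end Game

/-- Every n-player m-action polymatrix game (with payoffs normalized to [0,1]) has a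
k-uniform ε-Nash equilibrium whenever k ≥ 8(ln m + ln n − ln ε + ln 8)/ε². -/
theorem stmt_10 (n m : ℕ) (hn : 0 < n) (hm : 0 < m)
    (pay : Fin n → Fin n → Fin m → Fin m → ℝ)
    (hnorm : ∀ (i : Fin n) (a : Fin n → Fin m),
      (0 : ℝ) ≤ ∑ j ∈ Finset.univ.erase i, pay i j (a i) (a j) ∧
      ∑ j ∈ Finset.univ.erase i, pay i j (a i) (a j) ≤ 1)
    (ε : ℝ) (hε0 : 0 < ε) (hε1 : ε ≤ 1)
    (k : ℕ) (hk : (k : ℝ) ≥ 8 * (Real.log m + Real.log n - Real.log ε + Real.log 8) / ε ^ 2) :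
    ∃ σ : Fin n → Fin m → ℝ,
      (∀ i, KUniform k m (σ i)) ∧
      (∀ i, (∀ a, 0 ≤ σ i a) ∧ ∑ a, σ i a = 1) ∧
      ∀ i a', ∑ a, σ i a * purePay n m pay σ i a ≥ purePay n m pay σ i a' - ε := by
  classical
  have hn' : (0 : ℝ) < n := by exact_mod_cast hn
  have hm' : (0 : ℝ) < m := by exact_mod_cast hm
  rw [ge_iff_le, div_le_iff₀ (by positivity)] at hk
  have hlog : Real.log m + Real.log n - Real.log ε + Real.log 8 = -Real.log (ε / (8 * (n * m))) := by
    rw [Real.log_div hε0.ne' (by positivity), Real.log_mul (by norm_num) (by positivity),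
      Real.log_mul hn'.ne' hm'.ne']
    ring
  have hk0 : (0 : ℝ) < k := by
    have h1 : 0 ≤ Real.log m := Real.log_natCast_nonneg m
    have h2 : 0 ≤ Real.log n := Real.log_natCast_nonneg n
    have h3 : Real.log ε ≤ 0 := Real.log_nonpos hε0.le hε1
    have h4 : 0 < Real.log 8 := Real.log_pos (by norm_num)
    by_contra! hneg
    nlinarith [sq_nonneg ε]
  obtain ⟨σ, hσ, hbest⟩ := exists_nash (n := n) pay hm
  -- payoff of action `a` of player `i` against a pure profile `b`
  let Y : Fin n → Fin m → (Fin n → Fin m) → ℝ := fun i a b =>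
    ∑ j ∈ Finset.univ.erase i, pay i j a (b j)
  have hY : ∀ i a b, 0 ≤ Y i a b ∧ Y i a b ≤ 1 := by
    intro i a b
    have h := hnorm i (Function.update b i a)
    have e : ∑ j ∈ Finset.univ.erase i, pay i j (Function.update b i a i) (Function.update b i a j)
        = Y i a b := by
      refine Finset.sum_congr rfl fun j hj => ?_
      rw [Function.update_self, Function.update_of_ne (Finset.ne_of_mem_erase hj)]
    rwa [e] at h
  let p : (Fin n → Fin m) → ℝ := fun b => ∏ i, σ i (b i)
  have hp : ∀ b, 0 ≤ p b := fun b => Finset.prod_nonneg fun i _ => (hσ i).1 _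
  have hp1 : ∑ b, p b = 1 := by
    rw [← Fintype.prod_sum]
    simp [(hσ _).2]
  have hpY : ∀ i a, ∑ b, p b * Y i a b = purePay n m pay σ i a := by
    intro i a
    simp only [Y, Finset.mul_sum]
    rw [Finset.sum_comm]
    exact Finset.sum_congr rfl fun j _ => sum_prod_marginal σ (fun i => (hσ i).2) j (pay i j a)
  have hpay01 : ∀ i a, 0 ≤ purePay n m pay σ i a ∧ purePay n m pay σ i a ≤ 1 := by
    intro i a
    rw [← hpY]
    refine ⟨Finset.sum_nonneg fun b _ => mul_nonneg (hp b) (hY i a b).1, ?_⟩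
    rw [← hp1]
    exact Finset.sum_le_sum fun b _ => mul_le_of_le_one_right (hp b) (hY i a b).2
  -- the Boolean selects the upper or the lower deviation
  let Z : Fin n × Fin m × Bool → (Fin n → Fin m) → ℝ := fun q b =>
    (if q.2.2 then 1 else -1) * (Y q.1 q.2.1 b - purePay n m pay σ q.1 q.2.1)
  have hZ : ∀ q b, |Z q b| ≤ 1 := by
    rintro ⟨i, a, s⟩ b
    have h1 := hY i a b
    have h2 := hpay01 i a
    have h3 : |Y i a b - purePay n m pay σ i a| ≤ 1 := by
      rw [abs_le]; constructor <;> linarith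
    cases s <;> simpa [Z, abs_sub_comm] using h3
  have hmean : ∀ q, ∑ b, p b * Z q b = 0 := by
    rintro ⟨i, a, s⟩
    have : ∀ b, p b * Z (i, a, s) b = (if s then 1 else -1) *
        (p b * Y i a b - p b * purePay n m pay σ i a) := fun b => by
      simp only [Z]; ring
    simp only [this]
    rw [← Finset.mul_sum, Finset.sum_sub_distrib, ← Finset.sum_mul, hp1, hpY]
    ring
  have hcard : (Fintype.card (Fin n × Fin m × Bool) : ℝ) * Real.exp (-(k * (ε / 2) ^ 2 / 2))
      < 1 := by
    have h1 : Real.exp (-(k * (ε / 2) ^ 2 / 2)) ≤ ε / (8 * (n * m)) := by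
      rw [← Real.le_log_iff_exp_le (by positivity)]
      rw [hlog] at hk
      linarith
    simp only [Fintype.card_prod, Fintype.card_fin, Fintype.card_bool, Nat.cast_mul, Nat.cast_ofNat]
    calc _ ≤ (n * (m * 2) : ℝ) * (ε / (8 * (n * m))) := by gcongr
      _ = ε / 4 := by field_simp; norm_num
      _ < 1 := by linarith
  obtain ⟨f, hfp, hfZ⟩ := exists_good_sample p Z hp hp1 hZ hmean (ε / 2) (by positivity) k hcard
  -- the empirical mixed strategies of the sample
  let τ : Fin n → Fin m → ℝ := fun i a =>
    ((Finset.univ.filter (fun t : Fin k => f t i = a)).card : ℝ) / k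
  have hτsum : ∀ i (g : Fin m → ℝ), ∑ a, τ i a * g a = (∑ t, g (f t i)) / k := by
    intro i g
    rw [← Finset.sum_fiberwise (s := Finset.univ) (g := fun t => f t i), Finset.sum_div]
    refine Finset.sum_congr rfl fun a _ => ?_
    rw [Finset.sum_congr rfl (g := fun _ => g a)
      (fun t ht => by rw [(Finset.mem_filter.1 ht).2]), Finset.sum_const, nsmul_eq_mul]
    simp only [τ]; ring
  have hτ1 : ∀ i, ∑ a, τ i a = 1 := by
    intro i
    have := hτsum i (fun _ => 1)
    simpa [hk0.ne'] using this
  have hτ0 : ∀ i a, 0 ≤ τ i a := fun i a => by positivity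
  have hτY : ∀ i a, purePay n m pay τ i a = (∑ t, Y i a (f t)) / k := by
    intro i a
    simp only [purePay, hτsum, Y]
    rw [Finset.sum_comm, Finset.sum_div]
  have hsum : ∀ i a, ∑ t, (Y i a (f t) - purePay n m pay σ i a)
      = k * (purePay n m pay τ i a - purePay n m pay σ i a) := by
    intro i a
    rw [hτY, Finset.sum_sub_distrib]
    simp only [Finset.sum_const, Finset.card_univ, Fintype.card_fin, nsmul_eq_mul]
    field_simp
  have hup : ∀ i a, purePay n m pay τ i a - purePay n m pay σ i a < ε / 2 := by
    intro i a
    have h := hfZ (i, a, true)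
    simp only [Z, if_true, one_mul, hsum] at h
    exact lt_of_mul_lt_mul_left h hk0.le
  have hlo : ∀ i a, -(purePay n m pay τ i a - purePay n m pay σ i a) < ε / 2 := by
    intro i a
    have h := hfZ (i, a, false)
    simp only [Z, Bool.false_eq_true, if_false, ← Finset.mul_sum, hsum] at h
    refine lt_of_mul_lt_mul_left ?_ hk0.le
    linarith
  refine ⟨τ, fun i => ⟨fun t => f t i, fun a => rfl⟩, fun i => ⟨hτ0 i, hτ1 i⟩, fun i a' => ?_⟩
  have hmain : ∀ a, τ i a * (purePay n m pay τ i a' - ε) ≤ τ i a * purePay n m pay τ i a := by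
    intro a
    rcases (hτ0 i a).eq_or_lt with h0 | hpos
    · simp [← h0]
    · refine mul_le_mul_of_nonneg_left ?_ hpos.le
      -- an action in the support of `τ i` was sampled, hence lies in the support of `σ i`
      obtain ⟨t, ht⟩ : ∃ t, f t i = a := by
        by_contra! hnone
        simp [τ, hnone] at hpos
      have hσa : 0 < σ i a := by
        refine lt_of_le_of_ne ((hσ i).1 a) fun hz => (hfp t).ne' ?_
        exact Finset.prod_eq_zero (Finset.mem_univ i) (by rw [ht, ← hz])
      linarith [hbest i a hσa a', hup i a', hlo i a]
  calc purePay n m pay τ i a' - ε = ∑ a, τ i a * (purePay n m pay τ i a' - ε) := by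
        rw [← Finset.sum_mul, hτ1, one_mul]
    _ ≤ _ := Finset.sum_le_sum fun a _ => hmain a

end Stmt10
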